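/- Division Lemma: Given reduced words u ≼ v, there exists a reduced word w, unique up to permutation, such that for every reduced word x: [x·u] ≼ v if and only if x ≼ w. -/

import Mathlib

variable {V : Type*} [DecidableEq V] [Fintype V]

/-- A letter is a nonempty connected subset of the graph `G`
(connectedness of the induced subgraph includes nonemptiness). -/
def IsLetter (G : SimpleGraph V) (s : Finset V) : Prop :=
  (G.induce (↑s : Set V)).Connected

/-- The type of letters of `G`. -/
def Letter (G : SimpleGraph V) := {s : Finset V // IsLetter G s}

/-- A word is a finite sequence of letters. -/
abbrev Word (G : SimpleGraph V) := List (Letter G)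

/-- Two letters commute iff their union is not a letter (is disconnected). -/
def LCommute (G : SimpleGraph V) (s t : Letter G) : Prop :=
  ¬ IsLetter G (s.1 ∪ t.1)

/-- Two words commute if their letters pairwise commute. -/
def WCommute (G : SimpleGraph V) (u v : Word G) : Prop :=
  ∀ s ∈ u, ∀ t ∈ v, LCommute G s t

/-- One swap of two adjacent commuting letters. -/
def LSwapStep (G : SimpleGraph V) (w w' : Word G) : Prop :=
  ∃ (a b : Word G) (s t : Letter G), LCommute G s t ∧
    w = a ++ s :: t :: b ∧ w' = a ++ t :: s :: b

/-- Equivalence (`≈`) of words: sequences of swaps of adjacent commuting letters. -/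
def WEquiv (G : SimpleGraph V) : Word G → Word G → Prop :=
  Relation.ReflTransGen (LSwapStep G)

/-- A word is reduced if there is no pair of comparable letters such that the
smaller one commutes with all letters strictly in between. -/
def WIsReduced (G : SimpleGraph V) (w : Word G) : Prop :=
  ¬ ∃ (a b c : Word G) (s t : Letter G),
      w = a ++ s :: (b ++ t :: c) ∧
      ((s.1 ⊆ t.1 ∧ ∀ r ∈ b, LCommute G s r) ∨
       (t.1 ⊆ s.1 ∧ ∀ r ∈ b, LCommute G t r))

/-- A splitting of a letter `s`: a (possibly empty) word whose letters are
proper subsets of `s`. -/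
def IsSplitting (G : SimpleGraph V) (x : Word G) (s : Letter G) : Prop :=
  ∀ t ∈ x, t.1 ⊂ s.1

/-- `SplitStep G u v`: `u` is obtained from `v` by replacing one occurrence of a
letter by a splitting of it. -/
def SplitStep (G : SimpleGraph V) (u v : Word G) : Prop :=
  ∃ (a b x : Word G) (s : Letter G),
    v = a ++ s :: b ∧ IsSplitting G x s ∧ u = a ++ x ++ b

/-- One step of the splitting order up to equivalence. -/
def PrecStep (G : SimpleGraph V) (u v : Word G) : Prop :=
  ∃ u' v', WEquiv G v v' ∧ SplitStep G u' v' ∧ WEquiv G u u'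

/-- The splitting order `≺` on words. -/
def WPrec (G : SimpleGraph V) : Word G → Word G → Prop :=
  Relation.TransGen (PrecStep G)

/-- `u ≼ v` : `u ≺ v` or `u ≈ v`. -/
def WPreceq (G : SimpleGraph V) (u v : Word G) : Prop :=
  WPrec G u v ∨ WEquiv G u v

/-- Absorption: if `s ⊆ t`, replace a subword `s·t` (or `t·s`) by `t`. -/
def AbsorbStep (G : SimpleGraph V) (w w' : Word G) : Prop :=
  ∃ (a b : Word G) (s t : Letter G), s.1 ⊆ t.1 ∧
    (w = a ++ s :: t :: b ∨ w = a ++ t :: s :: b) ∧ w' = a ++ t :: b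

/-- A non-splitting reduction step: Commutation or Absorption. -/
def NSStep (G : SimpleGraph V) (w w' : Word G) : Prop :=
  LSwapStep G w w' ∨ AbsorbStep G w w'

/-- `NSRed G u v`: `v` is a non-splitting reduction of `u`, i.e. a reduced word
obtained from `u` by Commutation and Absorption steps only. -/
def NSRed (G : SimpleGraph V) (u v : Word G) : Prop :=
  Relation.ReflTransGen (NSStep G) u v ∧ WIsReduced G v

/-- The letter `t` is left-absorbed by the word `w`: `t` is contained in some
letter of `w` and commutes with all earlier letters. -/
def LetterLeftAbsorbed (G : SimpleGraph V) (t : Letter G) (w : Word G) : Prop :=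
  ∃ (a b : Word G) (s : Letter G), w = a ++ s :: b ∧ t.1 ⊆ s.1 ∧ ∀ r ∈ a, LCommute G t r

/-- The letter `t` is right-absorbed by the word `w`. -/
def LetterRightAbsorbed (G : SimpleGraph V) (t : Letter G) (w : Word G) : Prop :=
  ∃ (a b : Word G) (s : Letter G), w = a ++ s :: b ∧ t.1 ⊆ s.1 ∧ ∀ r ∈ b, LCommute G t r

/-- The letter `t` is properly left-absorbed by the word `w`. -/
def LetterProperLeftAbsorbed (G : SimpleGraph V) (t : Letter G) (w : Word G) : Prop :=
  ∃ (a b : Word G) (s : Letter G), w = a ++ s :: b ∧ t.1 ⊂ s.1 ∧ ∀ r ∈ a, LCommute G t r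

/-- The letter `t` is properly right-absorbed by the word `w`. -/
def LetterProperRightAbsorbed (G : SimpleGraph V) (t : Letter G) (w : Word G) : Prop :=
  ∃ (a b : Word G) (s : Letter G), w = a ++ s :: b ∧ t.1 ⊂ s.1 ∧ ∀ r ∈ b, LCommute G t r

/-- A word `u` is left-absorbed by `w` if each of its letters is. -/
def LeftAbsorbed (G : SimpleGraph V) (u w : Word G) : Prop :=
  ∀ t ∈ u, LetterLeftAbsorbed G t w

/-- A word `u` is right-absorbed by `w` if each of its letters is. -/
def RightAbsorbed (G : SimpleGraph V) (u w : Word G) : Prop :=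
  ∀ t ∈ u, LetterRightAbsorbed G t w

/-- A word `u` is properly left-absorbed by `w` if each of its letters is. -/
def ProperLeftAbsorbed (G : SimpleGraph V) (u w : Word G) : Prop :=
  ∀ t ∈ u, LetterProperLeftAbsorbed G t w

/-- A word `u` is properly right-absorbed by `w` if each of its letters is. -/
def ProperRightAbsorbed (G : SimpleGraph V) (u w : Word G) : Prop :=
  ∀ t ∈ u, LetterProperRightAbsorbed G t w

/-- A commuting word: its letters pairwise commute. -/
def IsCommuting (G : SimpleGraph V) (u : Word G) : Prop :=
  List.Pairwise (LCommute G) u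

/-- The letter `s` is an end of the word `u` if `u ≈ v·s` for some `v`. -/
def IsEnd (G : SimpleGraph V) (s : Letter G) (u : Word G) : Prop :=
  ∃ v, WEquiv G u (v ++ [s])

/-- `t` is the final segment of `u`: the commuting word consisting of all ends of `u`. -/
def IsFinalSegment (G : SimpleGraph V) (t u : Word G) : Prop :=
  IsCommuting G t ∧ ∀ s, s ∈ t ↔ IsEnd G s u

set_option linter.unusedSectionVars false

variable {G : SimpleGraph V}

/-! ### Commutation of letters -/

theorem isLetter_union_of_inter {s t : Finset V} (hs : IsLetter G s) (ht : IsLetter G t)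
    (h : (s ∩ t).Nonempty) : IsLetter G (s ∪ t) := by
  unfold IsLetter at *
  rw [Finset.coe_union]
  refine SimpleGraph.induce_union_connected hs.preconnected ht.preconnected ?_
  rw [← Finset.coe_inter]
  exact_mod_cast h

theorem Letter.nonempty (s : Letter G) : s.1.Nonempty := by
  obtain ⟨⟨a, ha⟩⟩ := s.2.nonempty
  exact ⟨a, by simpa using ha⟩

theorem LCommute.symm {s t : Letter G} (h : LCommute G s t) : LCommute G t s := by
  unfold LCommute at *
  rwa [Finset.union_comm]

theorem LCommute.mono_left {s t r : Letter G} (hst : s.1 ⊆ t.1) (h : LCommute G t r) :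
    LCommute G s r := by
  intro hs
  apply h
  have := isLetter_union_of_inter t.2 hs (by
    obtain ⟨a, ha⟩ := s.nonempty
    exact ⟨a, by simp [ha, hst ha]⟩)
  rwa [← Finset.union_assoc, Finset.union_eq_left.2 hst] at this

theorem LCommute.mono {s t s' t' : Letter G} (hs : s'.1 ⊆ s.1) (ht : t'.1 ⊆ t.1)
    (h : LCommute G s t) : LCommute G s' t' :=
  ((h.mono_left hs).symm.mono_left ht).symm

theorem LCommute.not_subset {s t : Letter G} (h : LCommute G s t) : ¬ s.1 ⊆ t.1 := by
  intro hs
  apply h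
  rw [Finset.union_eq_right.2 hs]
  exact t.2

theorem not_lCommute_iff {s t : Letter G} :
    ¬ LCommute G s t ↔ ∃ a ∈ s.1, ∃ b ∈ t.1, a = b ∨ G.Adj a b := by
  unfold LCommute
  rw [not_not]
  constructor
  · intro h
    by_contra! hc
    obtain ⟨a, ha⟩ := s.nonempty
    obtain ⟨b, hb⟩ := t.nonempty
    have hconn : (G.induce (↑(s.1 ∪ t.1) : Set V)).Connected := h
    obtain ⟨p⟩ := hconn.preconnected ⟨a, by simp [ha]⟩ ⟨b, by simp [hb]⟩
    obtain ⟨d, -, hd, hd'⟩ := p.exists_boundary_dart {x | x.1 ∈ s.1} ha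
      (fun hbs => (hc b hbs b hb).1 rfl)
    have hmem : d.snd.1 ∈ t.1 := by
      have := d.snd.2
      simp only [Finset.coe_union, Set.mem_union, Finset.mem_coe] at this
      exact this.resolve_left hd'
    exact (hc _ hd _ hmem).2 d.adj
  · rintro ⟨a, ha, b, hb, rfl | hab⟩
    · exact isLetter_union_of_inter s.2 t.2 ⟨a, by simp [ha, hb]⟩
    · unfold IsLetter
      rw [Finset.coe_union]
      exact SimpleGraph.connected_induce_union s.2.preconnected t.2.preconnected ha hb hab

theorem LCommute.of_subset_union {r r₁ r₂ t : Letter G} (h : r.1 ⊆ r₁.1 ∪ r₂.1)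
    (h₁ : LCommute G r₁ t) (h₂ : LCommute G r₂ t) : LCommute G r t := by
  by_contra hc
  obtain ⟨a, ha, b, hb, hab⟩ := not_lCommute_iff.1 hc
  rcases Finset.mem_union.1 (h ha) with ha | ha
  · exact not_lCommute_iff.2 ⟨a, ha, b, hb, hab⟩ h₁
  · exact not_lCommute_iff.2 ⟨a, ha, b, hb, hab⟩ h₂

/-! ### Equivalence of words -/

theorem LSwapStep.symm {x y : Word G} (h : LSwapStep G x y) : LSwapStep G y x := by
  obtain ⟨a, b, s, t, hc, rfl, rfl⟩ := h
  exact ⟨a, b, t, s, hc.symm, rfl, rfl⟩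

theorem WEquiv.symm {x y : Word G} (h : WEquiv G x y) : WEquiv G y x :=
  haveI : Std.Symm (LSwapStep G) := ⟨fun _ _ h => h.symm⟩
  Relation.ReflTransGen.stdSymm.symm _ _ h

theorem WEquiv.append_left (a : Word G) {x y : Word G} (h : WEquiv G x y) :
    WEquiv G (a ++ x) (a ++ y) := by
  refine Relation.ReflTransGen.lift (a ++ ·) ?_ _ _ h
  rintro _ _ ⟨c, d, s, t, hc, rfl, rfl⟩
  exact ⟨a ++ c, d, s, t, hc, by simp, by simp⟩

theorem WEquiv.append_right (a : Word G) {x y : Word G} (h : WEquiv G x y) :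
    WEquiv G (x ++ a) (y ++ a) := by
  refine Relation.ReflTransGen.lift (· ++ a) ?_ _ _ h
  rintro _ _ ⟨c, d, s, t, hc, rfl, rfl⟩
  exact ⟨c, d ++ a, s, t, hc, by simp, by simp⟩

theorem WEquiv.perm {x y : Word G} (h : WEquiv G x y) : x.Perm y := by
  induction h with
  | refl => exact List.Perm.refl _
  | tail _ h ih =>
    obtain ⟨c, d, s, t, hc, rfl, rfl⟩ := h
    exact ih.trans ((List.Perm.swap t s d).append_left c)

theorem wEquiv_cons_append {s : Letter G} {b : Word G} (h : ∀ r ∈ b, LCommute G s r) (c : Word G) :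
    WEquiv G (s :: (b ++ c)) (b ++ s :: c) := by
  induction b with
  | nil => exact Relation.ReflTransGen.refl
  | cons q b ih =>
    simp only [List.mem_cons, forall_eq_or_imp] at h
    exact Relation.ReflTransGen.head ⟨[], b ++ c, s, q, h.1, rfl, rfl⟩
      ((ih h.2).append_left [q])

/-! ### Reduced words -/

/-- `s` occurs in `w` after letters that all commute with `t`. -/
def ReachesFirst (t s : Letter G) (w : Word G) : Prop :=
  ∃ b c, w = b ++ s :: c ∧ ∀ r ∈ b, LCommute G t r

theorem reachesFirst_cons {t s q : Letter G} {w : Word G} :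
    ReachesFirst t s (q :: w) ↔ s = q ∨ LCommute G t q ∧ ReachesFirst t s w := by
  constructor
  · rintro ⟨b, c, h, hb⟩
    cases b with
    | nil => simp at h; exact Or.inl h.1.symm
    | cons q' b =>
      simp only [List.cons_append, List.cons.injEq] at h
      obtain ⟨rfl, rfl⟩ := h
      simp only [List.mem_cons, forall_eq_or_imp] at hb
      exact Or.inr ⟨hb.1, b, c, rfl, hb.2⟩
  · rintro (rfl | ⟨hq, b, c, rfl, hb⟩)
    · exact ⟨[], w, rfl, by simp⟩
    · exact ⟨q :: b, c, rfl, by simpa using ⟨hq, hb⟩⟩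

/-- Prepending `s` to `w` creates a pair of comparable letters that makes the word non-reduced. -/
def Clashes (s : Letter G) (w : Word G) : Prop :=
  ∃ t, (s.1 ⊆ t.1 ∧ ReachesFirst s t w) ∨ (t.1 ⊆ s.1 ∧ ReachesFirst t t w)

theorem wIsReduced_cons {s : Letter G} {w : Word G} :
    WIsReduced G (s :: w) ↔ ¬ Clashes s w ∧ WIsReduced G w := by
  constructor
  · refine fun h => ⟨?_, ?_⟩
    · rintro ⟨t, ⟨hs, b, c, rfl, hb⟩ | ⟨hs, b, c, rfl, hb⟩⟩
      · exact h ⟨[], b, c, s, t, rfl, Or.inl ⟨hs, hb⟩⟩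
      · exact h ⟨[], b, c, s, t, rfl, Or.inr ⟨hs, hb⟩⟩
    · rintro ⟨a, b, c, p, q, rfl, hpq⟩
      exact h ⟨s :: a, b, c, p, q, rfl, hpq⟩
  · rintro ⟨h, hw⟩ ⟨a, b, c, p, q, e, hpq⟩
    cases a with
    | nil =>
      simp only [List.nil_append, List.cons.injEq] at e
      obtain ⟨rfl, rfl⟩ := e
      rcases hpq with ⟨h1, h2⟩ | ⟨h1, h2⟩
      · exact h ⟨q, Or.inl ⟨h1, b, c, rfl, h2⟩⟩
      · exact h ⟨q, Or.inr ⟨h1, b, c, rfl, h2⟩⟩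
    | cons s' a =>
      simp only [List.cons_append, List.cons.injEq] at e
      obtain ⟨rfl, rfl⟩ := e
      exact hw ⟨a, b, c, p, q, rfl, hpq⟩

theorem WIsReduced.right {a b : Word G} (h : WIsReduced G (a ++ b)) : WIsReduced G b := by
  induction a with
  | nil => exact h
  | cons s a ih => exact ih (wIsReduced_cons.1 h).2

theorem ReachesFirst.swap {t s p q : Letter G} {w : Word G} (hts : t.1 ⊆ s.1)
    (hpq : LCommute G p q) (h : ReachesFirst t s (p :: q :: w)) :
    ReachesFirst t s (q :: p :: w) := by
  simp only [reachesFirst_cons] at h ⊢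
  rcases h with rfl | ⟨hp, rfl | ⟨hq, h⟩⟩
  · exact Or.inr ⟨hpq.mono_left hts, Or.inl rfl⟩
  · exact Or.inl rfl
  · exact Or.inr ⟨hq, Or.inr ⟨hp, h⟩⟩

theorem ReachesFirst.swapStep {t s : Letter G} {w w' : Word G} (hts : t.1 ⊆ s.1)
    (hw : LSwapStep G w w') (h : ReachesFirst t s w) : ReachesFirst t s w' := by
  obtain ⟨a, b, p, q, hpq, rfl, rfl⟩ := hw
  induction a with
  | nil => exact h.swap hts hpq
  | cons r a ih =>
    simp only [List.cons_append, reachesFirst_cons] at h ⊢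
    exact h.imp_right (And.imp_right ih)

theorem Clashes.swapStep {s : Letter G} {w w' : Word G} (hw : LSwapStep G w w')
    (h : Clashes s w) : Clashes s w' := by
  obtain ⟨t, ⟨hs, h⟩ | ⟨hs, h⟩⟩ := h
  · exact ⟨t, Or.inl ⟨hs, h.swapStep hs hw⟩⟩
  · exact ⟨t, Or.inr ⟨hs, h.swapStep subset_rfl hw⟩⟩

theorem clashes_cons_of_lCommute {p q : Letter G} {w : Word G} (hpq : LCommute G p q) :
    Clashes p (q :: w) ↔ Clashes p w := by
  unfold Clashes
  simp only [reachesFirst_cons]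
  refine exists_congr fun t => or_congr (and_congr_right fun h => ?_)
    (and_congr_right fun h => ?_)
  · constructor
    · rintro (rfl | h)
      · exact absurd h hpq.not_subset
      · exact h.2
    · exact fun h => Or.inr ⟨hpq, h⟩
  · constructor
    · rintro (rfl | h)
      · exact absurd h hpq.symm.not_subset
      · exact h.2
    · exact fun h' => Or.inr ⟨hpq.mono_left h, h'⟩

theorem WIsReduced.swapStep {w w' : Word G} (hw : LSwapStep G w w') (h : WIsReduced G w) :
    WIsReduced G w' := by
  obtain ⟨a, b, p, q, hpq, rfl, rfl⟩ := hw
  induction a with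
  | nil =>
    simp only [List.nil_append, wIsReduced_cons, clashes_cons_of_lCommute hpq,
      clashes_cons_of_lCommute hpq.symm] at h ⊢
    tauto
  | cons r a ih =>
    simp only [List.cons_append, wIsReduced_cons] at h ⊢
    exact ⟨fun hc => h.1 (hc.swapStep ⟨a, b, q, p, hpq.symm, rfl, rfl⟩), ih h.2⟩

theorem WIsReduced.wEquiv {w w' : Word G} (hw : WEquiv G w w') (h : WIsReduced G w) :
    WIsReduced G w' := by
  induction hw with
  | refl => exact h
  | tail _ hs ih => exact ih.swapStep hs

theorem exists_nsRed (w : Word G) : ∃ r, NSRed G w r := by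
  induction hn : w.length using Nat.strong_induction_on generalizing w with
  | _ n ih =>
    by_cases hw : WIsReduced G w
    · exact ⟨w, Relation.ReflTransGen.refl, hw⟩
    have key : ∃ w', Relation.ReflTransGen (NSStep G) w w' ∧ w'.length < w.length := by
      have lift : ∀ {x y : Word G}, WEquiv G x y → Relation.ReflTransGen (NSStep G) x y :=
        Relation.ReflTransGen.mono (fun _ _ => Or.inl) _ _
      obtain ⟨a, b, c, s, t, rfl, ⟨hst, hb⟩ | ⟨hst, hb⟩⟩ := not_not.1 hw
      · refine ⟨a ++ (b ++ t :: c), (lift ((wEquiv_cons_append hb _).append_left a)).tail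
          (Or.inr ⟨a ++ b, c, s, t, hst, Or.inl (by simp), by simp⟩), by simp⟩
      · refine ⟨a ++ s :: (b ++ c),
          (lift (((wEquiv_cons_append hb c).symm.append_left [s]).append_left a)).tail
          (Or.inr ⟨a, b ++ c, t, s, hst, Or.inr (by simp), by simp⟩), by simp⟩
    obtain ⟨w', h1, h2⟩ := key
    obtain ⟨r, h3, h4⟩ := ih _ (hn ▸ h2) w' rfl
    exact ⟨r, h1.trans h3, h4⟩

/-! ### The splitting order -/

theorem WPreceq.refl (x : Word G) : WPreceq G x x := Or.inr Relation.ReflTransGen.refl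

theorem WPreceq.of_wEquiv {x y : Word G} (h : WEquiv G x y) : WPreceq G x y := Or.inr h

theorem WPrec.wEquiv_trans {x y z : Word G} (h : WEquiv G x y) (h' : WPrec G y z) :
    WPrec G x z := by
  obtain ⟨y', ⟨u, v, h1, h2, h3⟩, h4⟩ := Relation.TransGen.head'_iff.1 h'
  exact Relation.TransGen.head'_iff.2 ⟨y', ⟨u, v, h1, h2, h.trans h3⟩, h4⟩

theorem WPrec.trans_wEquiv {x y z : Word G} (h' : WPrec G x y) (h : WEquiv G y z) :
    WPrec G x z := by
  obtain ⟨y', h'', ⟨u, v, h1, h2, h3⟩⟩ := Relation.TransGen.tail'_iff.1 h'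
  exact Relation.TransGen.tail'_iff.2 ⟨y', h'', ⟨u, v, h.symm.trans h1, h2, h3⟩⟩

theorem WPreceq.trans {x y z : Word G} (h : WPreceq G x y) (h' : WPreceq G y z) :
    WPreceq G x z := by
  rcases h with h | h <;> rcases h' with h' | h'
  · exact Or.inl (Relation.TransGen.trans h h')
  · exact Or.inl (h.trans_wEquiv h')
  · exact Or.inl (h'.wEquiv_trans h)
  · exact Or.inr (Relation.ReflTransGen.trans h h')

theorem WPreceq.cons (s : Letter G) {x y : Word G} (h : WPreceq G x y) :
    WPreceq G (s :: x) (s :: y) := by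
  refine h.imp (fun h => ?_) (fun h => h.append_left [s])
  refine Relation.TransGen.lift (s :: ·) ?_ _ _ h
  rintro _ _ ⟨u, v, h1, ⟨a, b, z, t, rfl, hz, rfl⟩, h3⟩
  exact ⟨_, _, h1.append_left [s], ⟨s :: a, b, z, t, rfl, hz, by simp⟩, h3.append_left [s]⟩

theorem WPrec.irrefl (x : Word G) : ¬ WPrec G x x := by
  intro h
  have hwf : WellFounded (fun s t : Letter G => s.1 ⊂ t.1) :=
    InvImage.wf (fun s : Letter G => s.1) (wellFounded_lt (α := Finset V))
  have step : ∀ u v : Word G, PrecStep G u v →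
      Relation.CutExpand (fun s t : Letter G => s.1 ⊂ t.1) (u : Multiset (Letter G)) v := by
    rintro u v ⟨u', v', h1, ⟨a, b, z, t, rfl, hz, rfl⟩, h3⟩
    rw [Multiset.coe_eq_coe.2 h1.perm, Multiset.coe_eq_coe.2 h3.perm]
    refine ⟨(z : Multiset (Letter G)), t, hz, ?_⟩
    simp only [← Multiset.coe_add, ← Multiset.cons_coe, ← Multiset.singleton_add]
    abel
  exact hwf.cutExpand.transGen.irrefl.irrefl _ (Relation.TransGen.lift _ step _ _ h)

theorem WPreceq.antisymm {x y : Word G} (h : WPreceq G x y) (h' : WPreceq G y x) :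
    WEquiv G x y := by
  rcases h with h | h
  · rcases h' with h' | h'
    · exact absurd (Relation.TransGen.trans h h') (WPrec.irrefl x)
    · exact h'.symm
  · exact h

/-! ### Domination by placing letters -/

/-- `p` assigns to each letter of a word a position of `v` carrying a larger letter, weakly
monotonically on non-commuting pairs. -/
def Placement (p : List (Letter G × ℕ)) (v : Word G) : Prop :=
  p.Pairwise (fun a b => LCommute G a.1 b.1 ∨ a.2 ≤ b.2) ∧
    ∀ a ∈ p, ∃ s, v[a.2]? = some s ∧ a.1.1 ⊆ s.1

/-- The preorder on words extending `≼` for which all letters are idempotent. -/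
def Dominated (x v : Word G) : Prop :=
  ∃ p : List (Letter G × ℕ), p.map Prod.fst = x ∧ Placement p v

theorem Dominated.append {x x' v v' : Word G} (h : Dominated x v) (h' : Dominated x' v') :
    Dominated (x ++ x') (v ++ v') := by
  obtain ⟨p, rfl, hp, hpv⟩ := h
  obtain ⟨q, rfl, hq, hqv⟩ := h'
  have hlt : ∀ a ∈ p, a.2 < v.length := fun a ha => by
    obtain ⟨s, hs, -⟩ := hpv a ha
    exact (List.getElem?_eq_some_iff.1 hs).1
  refine ⟨p ++ q.map (fun a => (a.1, v.length + a.2)), by simp [Function.comp_def], ?_, ?_⟩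
  · rw [List.pairwise_append, List.pairwise_map]
    refine ⟨hp, hq.imp fun h => h.imp_right (by simp), ?_⟩
    intro a ha b hb
    obtain ⟨b, -, rfl⟩ := List.mem_map.1 hb
    have := hlt a ha
    exact Or.inr (by simp; omega)
  · intro a ha
    rcases List.mem_append.1 ha with ha | ha
    · obtain ⟨s, hs, has⟩ := hpv a ha
      exact ⟨s, by rw [List.getElem?_append_left (hlt a ha), hs], has⟩
    · obtain ⟨b, hb, rfl⟩ := List.mem_map.1 ha
      obtain ⟨s, hs, has⟩ := hqv b hb
      exact ⟨s, by simpa [List.getElem?_append_right] using hs, has⟩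

theorem Dominated.trans {x v z : Word G} (h : Dominated x v) (h' : Dominated v z) :
    Dominated x z := by
  obtain ⟨p, rfl, hp, hpv⟩ := h
  obtain ⟨q, rfl, hq, hqz⟩ := h'
  have key : ∀ a ∈ p, ∃ b, q[a.2]? = some b ∧ a.1.1 ⊆ b.1.1 := fun a ha => by
    obtain ⟨s, hs, has⟩ := hpv a ha
    rw [List.getElem?_map, Option.map_eq_some_iff] at hs
    obtain ⟨b, hb, rfl⟩ := hs
    exact ⟨b, hb, has⟩
  refine ⟨p.map (fun a => (a.1, ((q[a.2]?).map Prod.snd).getD 0)), by simp [Function.comp_def],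
    ?_, ?_⟩
  · rw [List.pairwise_map]
    refine hp.imp_of_mem fun {a b} ha hb hab => ?_
    obtain ⟨a', ha', haa⟩ := key a ha
    obtain ⟨b', hb', hbb⟩ := key b hb
    rcases hab with hab | hab
    · exact Or.inl hab
    simp only [ha', hb', Option.map_some, Option.getD_some]
    rcases hab.eq_or_lt with e | hlt
    · rw [e, hb', Option.some.injEq] at ha'
      exact Or.inr (by rw [ha'])
    · obtain ⟨h1, rfl⟩ := List.getElem?_eq_some_iff.1 ha'
      obtain ⟨h2, rfl⟩ := List.getElem?_eq_some_iff.1 hb'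
      exact (List.pairwise_iff_getElem.1 hq _ _ h1 h2 hlt).imp_left fun h => h.mono haa hbb
  · intro a ha
    obtain ⟨a, ha', rfl⟩ := List.mem_map.1 ha
    obtain ⟨b, hb, hab⟩ := key a ha'
    obtain ⟨s, hs, hbs⟩ := hqz b (List.mem_of_getElem? hb)
    exact ⟨s, by simpa [hb] using hs, hab.trans hbs⟩

theorem dominated_singleton {x : Word G} {s : Letter G} (h : ∀ t ∈ x, t.1 ⊆ s.1) :
    Dominated x [s] := by
  refine ⟨x.map (fun t => (t, 0)), by simp [Function.comp_def], ?_, ?_⟩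
  · rw [List.pairwise_map]
    exact List.pairwise_of_forall (by simp)
  · intro a ha
    obtain ⟨a, ha', rfl⟩ := List.mem_map.1 ha
    exact ⟨s, rfl, h a ha'⟩

theorem nil_dominated (v : Word G) : Dominated [] v :=
  ⟨[], rfl, List.Pairwise.nil, by simp⟩

theorem Dominated.refl (x : Word G) : Dominated x x := by
  induction x with
  | nil => exact nil_dominated _
  | cons s x ih => exact (dominated_singleton (x := [s]) (s := s) (by simp)).append ih

theorem Dominated.context (a b : Word G) {x y : Word G} (h : Dominated x y) :
    Dominated (a ++ x ++ b) (a ++ y ++ b) :=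
  ((Dominated.refl a).append h).append (Dominated.refl b)

theorem LSwapStep.dominated {x y : Word G} (h : LSwapStep G x y) : Dominated x y := by
  obtain ⟨a, b, s, t, hc, rfl, rfl⟩ := h
  have : Dominated [s, t] [t, s] := ⟨[(s, 1), (t, 0)], rfl, by simp [hc], by simp⟩
  simpa using this.context a b

theorem WEquiv.dominated {x y : Word G} (h : WEquiv G x y) : Dominated x y := by
  induction h with
  | refl => exact Dominated.refl _
  | tail _ h ih => exact ih.trans h.dominated

theorem NSStep.dominated {x y : Word G} (h : NSStep G x y) :
    Dominated x y ∧ Dominated y x := by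
  rcases h with h | ⟨a, b, s, t, hst, rfl | rfl, rfl⟩
  · exact ⟨h.dominated, h.symm.dominated⟩
  · have h1 : Dominated [s, t] [t] := dominated_singleton (by simp [hst])
    have h2 : Dominated [t] [s, t] := (nil_dominated [s]).append (Dominated.refl [t])
    exact ⟨by simpa using h1.context a b, by simpa using h2.context a b⟩
  · have h1 : Dominated [t, s] [t] := dominated_singleton (by simp [hst])
    have h2 : Dominated [t] [t, s] := (Dominated.refl [t]).append (nil_dominated [s])
    exact ⟨by simpa using h1.context a b, by simpa using h2.context a b⟩

theorem NSRed.dominated {x r : Word G} (h : NSRed G x r) : Dominated x r ∧ Dominated r x := by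
  obtain ⟨h, -⟩ := h
  induction h with
  | refl => exact ⟨Dominated.refl _, Dominated.refl _⟩
  | tail _ h ih => exact ⟨ih.1.trans h.dominated.1, h.dominated.2.trans ih.2⟩

theorem WPreceq.dominated {x y : Word G} (h : WPreceq G x y) : Dominated x y := by
  have step : ∀ u v : Word G, PrecStep G u v → Dominated u v := by
    rintro u v ⟨u', v', h1, ⟨a, b, z, t, rfl, hz, rfl⟩, h3⟩
    have := (dominated_singleton fun r hr => (hz r hr).subset).context a b
    exact (h3.dominated.trans (by simpa using this)).trans h1.symm.dominated
  rcases h with h | h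
  · induction h with
    | single h => exact step _ _ h
    | tail _ h ih => exact ih.trans (step _ _ h)
  · exact h.dominated

theorem wEquiv_filter_append {p : List (Letter G × ℕ)}
    (hp : p.Pairwise (fun a b => LCommute G a.1 b.1 ∨ a.2 ≤ b.2)) (n : ℕ) :
    WEquiv G (p.map Prod.fst) ((p.filter (fun a => a.2 < n)).map Prod.fst ++
      (p.filter (fun a => ¬ a.2 < n)).map Prod.fst) := by
  induction p with
  | nil => exact Relation.ReflTransGen.refl
  | cons a p ih =>
    rw [List.pairwise_cons] at hp
    have := (ih hp.2).append_left [a.1]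
    by_cases ha : a.2 < n
    · simpa [ha] using this
    · have hc : ∀ r ∈ (p.filter (fun a => a.2 < n)).map Prod.fst, LCommute G a.1 r := by
        intro r hr
        obtain ⟨b, hb, rfl⟩ := List.mem_map.1 hr
        rw [List.mem_filter, decide_eq_true_eq] at hb
        exact (hp.1 b hb.1).resolve_right (by omega)
      have h2 := wEquiv_cons_append hc ((p.filter (fun a => ¬ a.2 < n)).map Prod.fst)
      have := Relation.ReflTransGen.trans this h2
      simpa [WEquiv, ha, not_lt.1 ha] using this

theorem Placement.filter_lt {p : List (Letter G × ℕ)} {v w : Word G} (h : Placement p (v ++ w)) :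
    Placement (p.filter (fun a => a.2 < v.length)) v := by
  refine ⟨h.1.filter _, fun a ha => ?_⟩
  rw [List.mem_filter, decide_eq_true_eq] at ha
  have := h.2 a ha.1
  rwa [List.getElem?_append_left ha.2] at this

theorem Placement.filter_not_lt {p : List (Letter G × ℕ)} {v w : Word G}
    (h : Placement p (v ++ w)) :
    Dominated ((p.filter (fun a => ¬ a.2 < v.length)).map Prod.fst) w := by
  refine ⟨(p.filter (fun a => ¬ a.2 < v.length)).map (fun a => (a.1, a.2 - v.length)),
    by simp [Function.comp_def], ?_, fun a ha => ?_⟩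
  · rw [List.pairwise_map]
    exact (h.1.filter _).imp fun h => h.imp_right (by simp; omega)
  · obtain ⟨a, ha', rfl⟩ := List.mem_map.1 ha
    rw [List.mem_filter, decide_eq_true_eq] at ha'
    have := h.2 a ha'.1
    rwa [List.getElem?_append_right (by omega)] at this

theorem dominated_nil {x : Word G} (h : Dominated x []) : x = [] := by
  obtain ⟨p, rfl, -, hp⟩ := h
  cases p with
  | nil => rfl
  | cons a p => simpa using hp a (by simp)

theorem Dominated.exists_of_cons {x v : Word G} {s : Letter G} (h : Dominated x (s :: v)) :
    ∃ y z, WEquiv G x (y ++ z) ∧ (∀ t ∈ y, t.1 ⊆ s.1) ∧ Dominated z v := by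
  obtain ⟨p, rfl, hp⟩ := h
  have hp' : Placement p ([s] ++ v) := hp
  refine ⟨_, _, wEquiv_filter_append hp.1 1, fun t ht => ?_, hp'.filter_not_lt⟩
  obtain ⟨a, ha, rfl⟩ := List.mem_map.1 ht
  obtain ⟨r, hr, har⟩ := hp'.filter_lt.2 a ha
  rw [List.mem_filter, decide_eq_true_eq] at ha
  obtain rfl : s = r := by simpa [show a.2 = 0 by omega] using hr
  exact har

theorem WIsReduced.eq_singleton {y z : Word G} {s : Letter G} (h : WIsReduced G (y ++ z))
    (hy : ∀ t ∈ y, t.1 ⊆ s.1) (hs : s ∈ y) : y = [s] := by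
  obtain ⟨a, b, rfl⟩ := List.append_of_mem hs
  have hb : b = [] := by
    cases b with
    | nil => rfl
    | cons t b =>
      exact absurd ⟨a, [], b ++ z, s, t, by simp, Or.inr ⟨hy t (by simp), by simp⟩⟩ h
  have ha : a = [] := by
    rcases List.eq_nil_or_concat a with rfl | ⟨a, t, rfl⟩
    · rfl
    · exact absurd ⟨a, [], b ++ z, t, s, by simp, Or.inl ⟨hy t (by simp), by simp⟩⟩ h
  simp [ha, hb]

theorem Dominated.wPreceq {x v : Word G} (hx : WIsReduced G x) (h : Dominated x v) :
    WPreceq G x v := by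
  induction v generalizing x with
  | nil => exact dominated_nil h ▸ WPreceq.refl _
  | cons s v ih =>
    obtain ⟨y, z, hxyz, hy, hz⟩ := h.exists_of_cons
    have hyz := hx.wEquiv hxyz
    refine (WPreceq.of_wEquiv hxyz).trans (WPreceq.trans ?_ ((ih hyz.right hz).cons s))
    by_cases hs : s ∈ y
    · rw [hyz.eq_singleton hy hs]
      exact WPreceq.refl _
    · refine Or.inl (Relation.TransGen.single ⟨y ++ z, s :: z, Relation.ReflTransGen.refl,
        ⟨[], z, y, s, rfl, fun t ht => (hy t ht).ssubset_of_ne fun e => ?_, rfl⟩,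
        Relation.ReflTransGen.refl⟩)
      exact hs (Subtype.ext e ▸ ht)

theorem exists_nsRed_wPreceq_iff {x v : Word G} :
    (∃ r, NSRed G x r ∧ WPreceq G r v) ↔ Dominated x v := by
  constructor
  · rintro ⟨r, h, h'⟩
    exact h.dominated.1.trans h'.dominated
  · intro h
    obtain ⟨r, hr⟩ := exists_nsRed x
    exact ⟨r, hr, (hr.dominated.2.trans h).wPreceq hr.2⟩

/-! ### Division -/

/-- The letters contained in `s` and commuting with `t` are covered by a commuting word. -/
theorem exists_commuting_cover (s t : Letter G) : ∃ c : Word G, IsCommuting G c ∧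
    (∀ r ∈ c, r.1 ⊆ s.1 ∧ LCommute G t r) ∧
    ∀ r : Letter G, r.1 ⊆ s.1 → LCommute G t r → ∃ q ∈ c, r.1 ⊆ q.1 := by
  classical
  have : Finite (Letter G) := inferInstanceAs (Finite {s : Finset V // IsLetter G s})
  let S : Set (Letter G) := {r | r.1 ⊆ s.1 ∧ LCommute G t r}
  let M : Set (Letter G) := {r | r ∈ S ∧ ∀ q ∈ S, r.1 ⊆ q.1 → q.1 ⊆ r.1}
  have hM : M.Finite := Set.toFinite _
  have hunion : ∀ r ∈ M, ∀ q ∈ M, ¬ LCommute G r q → r.1 ⊆ q.1 := by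
    intro r hr q hq hrq
    let l : Letter G := ⟨r.1 ∪ q.1, not_not.1 hrq⟩
    have hl : l ∈ S := ⟨Finset.union_subset hr.1.1 hq.1.1,
      (LCommute.of_subset_union (r := l) subset_rfl hr.1.2.symm hq.1.2.symm).symm⟩
    exact Finset.subset_union_left.trans (hq.2 l hl Finset.subset_union_right)
  refine ⟨hM.toFinset.toList, ?_, fun r hr => ?_, fun r hr hrt => ?_⟩
  · refine hM.toFinset.nodup_toList.imp_of_mem fun {r q} hr hq hrq => ?_
    simp only [Finset.mem_toList, Set.Finite.mem_toFinset] at hr hq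
    by_contra hc
    exact hrq (Subtype.ext ((hunion r hr q hq hc).antisymm
      (hunion q hq r hr fun h => hc h.symm)))
  · simp only [Finset.mem_toList, Set.Finite.mem_toFinset] at hr
    exact hr.1
  · obtain ⟨m, hm, hmax⟩ := Set.Finite.exists_maximalFor (fun q : Letter G => q.1)
      {q | q ∈ S ∧ r.1 ⊆ q.1} (Set.toFinite _) ⟨r, ⟨hr, hrt⟩, subset_rfl⟩
    refine ⟨m, ?_, hm.2⟩
    simp only [Finset.mem_toList, Set.Finite.mem_toFinset]
    exact ⟨hm.1, fun q hq hmq => hmax ⟨hq, hm.2.trans hmq⟩ hmq⟩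

theorem IsCommuting.dominated {d y : Word G} (hd : IsCommuting G d)
    (h : ∀ r ∈ y, ∃ q ∈ d, r.1 ⊆ q.1) : Dominated y d := by
  have key : ∀ r ∈ y, ∃ (i : ℕ) (q : Letter G), d[i]? = some q ∧ r.1 ⊆ q.1 := fun r hr => by
    obtain ⟨q, hq, hrq⟩ := h r hr
    obtain ⟨i, hi⟩ := List.mem_iff_getElem?.1 hq
    exact ⟨i, q, hi, hrq⟩
  choose! f g hf hg using key
  refine ⟨y.map fun r => (r, f r), by simp [Function.comp_def], ?_, fun a ha => ?_⟩
  · rw [List.pairwise_map]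
    refine (List.pairwise_of_forall (R := fun _ _ => True) (fun _ _ => trivial)).imp_of_mem
      fun {a b} ha hb _ => ?_
    rcases le_or_gt (f a) (f b) with hab | hab
    · exact Or.inr hab
    · obtain ⟨h1, e1⟩ := List.getElem?_eq_some_iff.1 (hf a ha)
      obtain ⟨h2, e2⟩ := List.getElem?_eq_some_iff.1 (hf b hb)
      have := List.pairwise_iff_getElem.1 hd _ _ h2 h1 hab
      rw [e1, e2] at this
      exact Or.inl (this.symm.mono (hg a ha) (hg b hb))
  · obtain ⟨r, hr, rfl⟩ := List.mem_map.1 ha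
    exact ⟨g r hr, hf r hr, hg r hr⟩

/-- There is a largest word below `b` all of whose letters commute with `t`. -/
theorem exists_largest_commuting (t : Letter G) (b : Word G) : ∃ d : Word G,
    Dominated d b ∧ (∀ r ∈ d, LCommute G t r) ∧
    ∀ z, Dominated z b → (∀ r ∈ z, LCommute G t r) → Dominated z d := by
  induction b with
  | nil => exact ⟨[], nil_dominated _, by simp, fun z hz _ => hz⟩
  | cons s b ih =>
    obtain ⟨d, hd, hdt, hmax⟩ := ih
    obtain ⟨c, hc, hcs, hcov⟩ := exists_commuting_cover s t
    refine ⟨c ++ d, (dominated_singleton fun r hr => (hcs r hr).1).append hd, fun r hr => ?_,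
      fun z hz hzt => ?_⟩
    · exact (List.mem_append.1 hr).elim (fun hr => (hcs r hr).2) (hdt r)
    · obtain ⟨y, z', he, hy, hz'⟩ := hz.exists_of_cons
      have hyz : ∀ r ∈ y ++ z', LCommute G t r := fun r hr => hzt r (he.perm.mem_iff.2 hr)
      refine he.dominated.trans (Dominated.append ?_ ?_)
      · exact hc.dominated fun r hr => hcov r (hy r hr) (hyz r (by simp [hr]))
      · exact hmax z' hz' fun r hr => hyz r (by simp [hr])

theorem exists_last_superset {t : Letter G} {v : Word G} (h : ∃ s ∈ v, t.1 ⊆ s.1) :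
    ∃ a s b, v = a ++ s :: b ∧ t.1 ⊆ s.1 ∧ ∀ r ∈ b, ¬ t.1 ⊆ r.1 := by
  induction v with
  | nil => simp at h
  | cons q v ih =>
    by_cases hv : ∃ s ∈ v, t.1 ⊆ s.1
    · obtain ⟨a, s, b, rfl, h1, h2⟩ := ih hv
      exact ⟨q :: a, s, b, rfl, h1, h2⟩
    · push Not at hv
      obtain ⟨s, hs, hts⟩ := h
      rcases List.mem_cons.1 hs with rfl | hs
      · exact ⟨[], s, v, rfl, hts, hv⟩
      · exact absurd hts (hv s hs)

theorem exists_division_letter {t : Letter G} {v : Word G} (h : ∃ s ∈ v, t.1 ⊆ s.1) :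
    ∃ w, ∀ x, Dominated (x ++ [t]) v ↔ Dominated x w := by
  obtain ⟨a, s, b, rfl, hts, hb⟩ := exists_last_superset h
  obtain ⟨d, hdb, hdt, hmax⟩ := exists_largest_commuting t b
  refine ⟨(a ++ [s]) ++ d, fun x => ⟨?_, fun hx => ?_⟩⟩
  · rintro ⟨P, hP, hPv⟩
    obtain ⟨p, P', rfl, rfl, hP'⟩ := List.map_eq_append_iff.1 hP
    obtain ⟨⟨t, j⟩, rfl, rfl⟩ := List.map_eq_singleton_iff.1 hP'
    have hv : a ++ s :: b = (a ++ [s]) ++ b := by simp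
    rw [hv] at hPv
    have hp : Placement p ((a ++ [s]) ++ b) :=
      ⟨(List.pairwise_append.1 hPv.1).1, fun q hq => hPv.2 q (by simp [hq])⟩
    have hj : j < (a ++ [s]).length := by
      by_contra hj
      obtain ⟨r, hr, htr⟩ := hPv.2 (t, j) (by simp)
      rw [List.getElem?_append_right (by simpa using hj)] at hr
      exact hb r (List.mem_of_getElem? hr) htr
    refine (wEquiv_filter_append hp.1 (a ++ [s]).length).dominated.trans
      (Dominated.append ⟨_, rfl, hp.filter_lt⟩ (hmax _ hp.filter_not_lt fun r hr => ?_))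
    obtain ⟨q, hq, rfl⟩ := List.mem_map.1 hr
    rw [List.mem_filter, decide_eq_true_eq] at hq
    exact (((List.pairwise_append.1 hPv.1).2.2 q hq.1 (t, j) (by simp)).resolve_right
      (by simp only; omega)).symm
  · have h1 : WEquiv G (d ++ [t]) (t :: d) := by
      simpa using (wEquiv_cons_append hdt []).symm
    have h2 : Dominated (s :: t :: d) (s :: b) :=
      (dominated_singleton (x := [s, t]) (by simp [hts])).append hdb
    have h3 : Dominated ((a ++ [s]) ++ (d ++ [t])) ((a ++ [s]) ++ t :: d) :=
      (Dominated.refl _).append h1.dominated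
    have h4 : Dominated (a ++ s :: t :: d) (a ++ s :: b) := (Dominated.refl a).append h2
    have h5 := hx.append (Dominated.refl [t])
    rw [List.append_assoc] at h5
    exact (h5.trans h3).trans (by simpa using h4)

theorem exists_division {u v : Word G} (h : Dominated u v) :
    ∃ w, ∀ x, Dominated (x ++ u) v ↔ Dominated x w := by
  induction u using List.reverseRecOn generalizing v with
  | nil => exact ⟨v, by simp⟩
  | append_singleton u t ih =>
    have ht : ∃ s ∈ v, t.1 ⊆ s.1 := by
      obtain ⟨p, hp, -, hpv⟩ := h
      obtain ⟨a, ha, rfl⟩ := List.mem_map.1 (hp ▸ (by simp : t ∈ u ++ [t]))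
      obtain ⟨s, hs, hts⟩ := hpv a ha
      exact ⟨s, List.mem_of_getElem? hs, hts⟩
    obtain ⟨w, hw⟩ := exists_division_letter ht
    obtain ⟨w', hw'⟩ := ih ((hw u).1 h)
    exact ⟨w', fun x => by rw [← List.append_assoc, hw, hw']⟩

/-- Division Lemma: given reduced words `u ≼ v`, there is a reduced word `w`
(written `v/u`), unique up to permutation, such that for every reduced word
`x`: `[x·u] ≼ v` iff `x ≼ w`. -/
theorem division_lemma (G : SimpleGraph V) (u v : Word G)
    (hu : WIsReduced G u) (hv : WIsReduced G v) (hle : WPreceq G u v) :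
    ∃ w : Word G, WIsReduced G w ∧
      (∀ x : Word G, WIsReduced G x →
        ((∃ r, NSRed G (x ++ u) r ∧ WPreceq G r v) ↔ WPreceq G x w)) ∧
      (∀ w' : Word G, WIsReduced G w' →
        (∀ x : Word G, WIsReduced G x →
          ((∃ r, NSRed G (x ++ u) r ∧ WPreceq G r v) ↔ WPreceq G x w')) →
        WEquiv G w w') := by
  obtain ⟨w₀, hw₀⟩ := exists_division hle.dominated
  obtain ⟨w, hw⟩ := exists_nsRed w₀
  have key : ∀ x : Word G, WIsReduced G x →
      ((∃ r, NSRed G (x ++ u) r ∧ WPreceq G r v) ↔ WPreceq G x w) := fun x hx => by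
    rw [exists_nsRed_wPreceq_iff, hw₀]
    exact ⟨fun h => (h.trans hw.dominated.1).wPreceq hx,
      fun h => h.dominated.trans hw.dominated.2⟩
  refine ⟨w, hw.2, key, fun w' hw' key' => WPreceq.antisymm ?_ ?_⟩
  · exact (key' w hw.2).1 ((key w hw.2).2 (WPreceq.refl w))
  · exact (key w' hw').1 ((key' w' hw').2 (WPreceq.refl w'))
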